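/- Let h be a real-valued C^2 function on an open subset of ℝ² with h(u,v) > 0, and define the critical end chart β(u,v) = (u/h(u,v), v/h(u,v), 1/h(u,v)) ∈ ℝ³. Then the triple products of the second partial derivatives of β with β_u and β_v satisfy det[β_uu, β_u, β_v] = −h_uu/h⁴, det[β_uv, β_u, β_v] = −h_uv/h⁴, and det[β_vv, β_u, β_v] = −h_vv/h⁴, where det[X,Y,Z] denotes the determinant of the 3×3 matrix with rows (or columns) X, Y, Z in ℝ³ and h_uu, h_uv, h_vv are the second partial derivatives of h. Consequently the second fundamental form coefficients e = det[β_uu, β_u, β_v]/|β_u × β_v|, f = det[β_uv, β_u, β_v]/|β_u × β_v|, g = det[β_vv, β_u, β_v]/|β_u × β_v| equal −h_uu/(h⁴√(EG−F²)), −h_uv/(h⁴√(EG−F²)), −h_vv/(h⁴√(EG−F²)) respectively, where EG − F² = |β_u × β_v|². -/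

import Mathlib

noncomputable section

/-- Euclidean dot product on `ℝ³` (as `Fin 3 → ℝ`). -/
def dot3 (x y : Fin 3 → ℝ) : ℝ := x 0 * y 0 + x 1 * y 1 + x 2 * y 2

/-- Standard cross product on `ℝ³`. -/
def cross3 (x y : Fin 3 → ℝ) : Fin 3 → ℝ :=
  ![x 1 * y 2 - x 2 * y 1, x 2 * y 0 - x 0 * y 2, x 0 * y 1 - x 1 * y 0]

/-- Triple (determinant) product of three vectors in `ℝ³`. -/
def det3 (x y z : Fin 3 → ℝ) : ℝ := Matrix.det (Matrix.of ![x, y, z])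

/-- Partial derivative with respect to the first variable `u`. -/
def pdu (f : ℝ × ℝ → ℝ) (p : ℝ × ℝ) : ℝ := fderiv ℝ f p (1, 0)

/-- Partial derivative with respect to the second variable `v`. -/
def pdv (f : ℝ × ℝ → ℝ) (p : ℝ × ℝ) : ℝ := fderiv ℝ f p (0, 1)

/-- Partial derivative (vector valued) with respect to the first variable. -/
def vdu (f : ℝ × ℝ → Fin 3 → ℝ) (p : ℝ × ℝ) : Fin 3 → ℝ := fderiv ℝ f p (1, 0)

/-- Partial derivative (vector valued) with respect to the second variable. -/
def vdv (f : ℝ × ℝ → Fin 3 → ℝ) (p : ℝ × ℝ) : Fin 3 → ℝ := fderiv ℝ f p (0, 1)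

theorem aux_div {g h : ℝ × ℝ → ℝ} {q : ℝ × ℝ} (hg : DifferentiableAt ℝ g q)
    (hh : DifferentiableAt ℝ h q) (h0 : h q ≠ 0) (d : ℝ × ℝ) :
    fderiv ℝ (fun x => g x / h x) q d
      = (fderiv ℝ g q d * h q - g q * fderiv ℝ h q d) / h q ^ 2 := by
  have := (hg.hasFDerivAt.mul ((hasDerivAt_inv h0).comp_hasFDerivAt q hh.hasFDerivAt)).fderiv
  have e : (fun x => g x / h x) = g * (Inv.inv ∘ h) := by
    ext x; simp [div_eq_mul_inv]
  rw [e, this]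
  simp
  field_simp
  ring

theorem aux_divd {g h : ℝ × ℝ → ℝ} {q : ℝ × ℝ} (hg : DifferentiableAt ℝ g q)
    (hh : DifferentiableAt ℝ h q) (h0 : h q ≠ 0) :
    DifferentiableAt ℝ (fun x => g x / h x) q := by
  simp only [div_eq_mul_inv]
  exact hg.fun_mul (hh.fun_inv h0)

theorem aux_vec {a b c : ℝ × ℝ → ℝ} {q : ℝ × ℝ} (ha : DifferentiableAt ℝ a q)
    (hb : DifferentiableAt ℝ b q) (hc : DifferentiableAt ℝ c q)
    (B : ℝ × ℝ → Fin 3 → ℝ) (hB : B =ᶠ[nhds q] fun x => ![a x, b x, c x]) (d : ℝ × ℝ) :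
    fderiv ℝ B q d = ![fderiv ℝ a q d, fderiv ℝ b q d, fderiv ℝ c q d] := by
  rw [hB.fderiv_eq]
  have : HasFDerivAt (fun x => ![a x, b x, c x])
      (ContinuousLinearMap.pi ![fderiv ℝ a q, fderiv ℝ b q, fderiv ℝ c q]) q := by
    rw [hasFDerivAt_pi']
    intro i
    fin_cases i
    · exact ha.hasFDerivAt
    · exact hb.hasFDerivAt
    · exact hc.hasFDerivAt
  rw [this.fderiv]
  ext i
  fin_cases i <;> rfl

theorem aux_first {U : Set (ℝ × ℝ)} (hU : IsOpen U) {h : ℝ × ℝ → ℝ}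
    (hh : ContDiffOn ℝ 2 h U) (hpos : ∀ p ∈ U, 0 < h p)
    {β : ℝ × ℝ → Fin 3 → ℝ}
    (hβ : ∀ p ∈ U, β p = ![p.1 / h p, p.2 / h p, 1 / h p]) (d q : ℝ × ℝ) (hq : q ∈ U) :
    fderiv ℝ β q d = ![(d.1 * h q - q.1 * fderiv ℝ h q d) / h q ^ 2,
      (d.2 * h q - q.2 * fderiv ℝ h q d) / h q ^ 2, (- fderiv ℝ h q d) / h q ^ 2] := by
  have hd : DifferentiableAt ℝ h q :=
    (hh.contDiffAt (hU.mem_nhds hq)).differentiableAt (by norm_num)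
  have h0 := (hpos q hq).ne'
  rw [aux_vec (a := fun p => p.1 / h p) (b := fun p => p.2 / h p) (c := fun p => 1 / h p)
    (aux_divd differentiableAt_fst hd h0) (aux_divd differentiableAt_snd hd h0)
    (aux_divd (differentiableAt_const 1) hd h0) β
    (Filter.eventually_of_mem (hU.mem_nhds hq) hβ) d,
    aux_div differentiableAt_fst hd h0, aux_div differentiableAt_snd hd h0,
    aux_div (differentiableAt_const 1) hd h0]
  simp [fderiv_fst, fderiv_snd]

theorem aux_second {U : Set (ℝ × ℝ)} (hU : IsOpen U) {h : ℝ × ℝ → ℝ}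
    (hh : ContDiffOn ℝ 2 h U) (hpos : ∀ p ∈ U, 0 < h p)
    {β : ℝ × ℝ → Fin 3 → ℝ}
    (hβ : ∀ p ∈ U, β p = ![p.1 / h p, p.2 / h p, 1 / h p]) (d e q : ℝ × ℝ) (hq : q ∈ U) :
    fderiv ℝ (fun x => fderiv ℝ β x d) q e =
     (fun (H K L M : ℝ) =>
      ![((d.1 * L - (e.1 * K + q.1 * M)) * H ^ 2 - (d.1 * H - q.1 * K) * (2 * H * L)) / (H ^ 2) ^ 2,
        ((d.2 * L - (e.2 * K + q.2 * M)) * H ^ 2 - (d.2 * H - q.2 * K) * (2 * H * L)) / (H ^ 2) ^ 2,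
        ((- M) * H ^ 2 - (- K) * (2 * H * L)) / (H ^ 2) ^ 2])
      (h q) (fderiv ℝ h q d) (fderiv ℝ h q e) (fderiv ℝ (fun x => fderiv ℝ h x d) q e) := by
  have hc := hh.contDiffAt (hU.mem_nhds hq)
  have hd : DifferentiableAt ℝ h q := hc.differentiableAt (by norm_num)
  have hk : DifferentiableAt ℝ (fun x => fderiv ℝ h x d) q :=
    ((hc.fderiv_right (m := 1) (by norm_num)).differentiableAt (by norm_num)).clm_apply
      (differentiableAt_const d)
  have h0 := (hpos q hq).ne'
  have h2 : DifferentiableAt ℝ (fun x => h x ^ 2) q := hd.fun_pow 2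
  have h20 : h q ^ 2 ≠ 0 := pow_ne_zero 2 h0
  have n1 : HasFDerivAt (fun x : ℝ × ℝ => d.1 * h x - x.1 * fderiv ℝ h x d) _ q :=
    (hd.hasFDerivAt.const_mul d.1).fun_sub (hasFDerivAt_fst.fun_mul hk.hasFDerivAt)
  have n2 : HasFDerivAt (fun x : ℝ × ℝ => d.2 * h x - x.2 * fderiv ℝ h x d) _ q :=
    (hd.hasFDerivAt.const_mul d.2).fun_sub (hasFDerivAt_snd.fun_mul hk.hasFDerivAt)
  have n3 : HasFDerivAt (fun x : ℝ × ℝ => - fderiv ℝ h x d) _ q := hk.hasFDerivAt.fun_neg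
  have n4 : HasFDerivAt (fun x => h x ^ 2) _ q := (hasDerivAt_pow 2 (h q)).comp_hasFDerivAt q hd.hasFDerivAt
  rw [aux_vec (aux_divd n1.differentiableAt h2 h20) (aux_divd n2.differentiableAt h2 h20)
    (aux_divd n3.differentiableAt h2 h20) _
    (Filter.eventually_of_mem (hU.mem_nhds hq) (aux_first hU hh hpos hβ d)) e,
    aux_div n1.differentiableAt h2 h20, aux_div n2.differentiableAt h2 h20,
    aux_div n3.differentiableAt h2 h20, n1.fderiv, n2.fderiv, n3.fderiv, n4.fderiv]
  ext i
  fin_cases i <;> simp <;> ring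

/-- triple products and second fundamental form coefficients of the critical
end chart `β(u,v) = (u/h, v/h, 1/h)`. -/
theorem stmt_16 (U : Set (ℝ × ℝ)) (hU : IsOpen U) (h : ℝ × ℝ → ℝ)
    (hh : ContDiffOn ℝ 2 h U) (hpos : ∀ p ∈ U, 0 < h p)
    (β : ℝ × ℝ → Fin 3 → ℝ)
    (hβ : ∀ p ∈ U, β p = ![p.1 / h p, p.2 / h p, 1 / h p]) :
    ∀ p ∈ U,
      det3 (vdu (vdu β) p) (vdu β p) (vdv β p) = -(pdu (pdu h) p) / h p ^ 4 ∧
      det3 (vdv (vdu β) p) (vdu β p) (vdv β p) = -(pdv (pdu h) p) / h p ^ 4 ∧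
      det3 (vdv (vdv β) p) (vdu β p) (vdv β p) = -(pdv (pdv h) p) / h p ^ 4 ∧
      (let E := dot3 (vdu β p) (vdu β p)
       let F := dot3 (vdu β p) (vdv β p)
       let G := dot3 (vdv β p) (vdv β p)
       let nrm := Real.sqrt
         (dot3 (cross3 (vdu β p) (vdv β p)) (cross3 (vdu β p) (vdv β p)))
       E * G - F ^ 2 =
         dot3 (cross3 (vdu β p) (vdv β p)) (cross3 (vdu β p) (vdv β p)) ∧
       det3 (vdu (vdu β) p) (vdu β p) (vdv β p) / nrm =
         -(pdu (pdu h) p) / (h p ^ 4 * Real.sqrt (E * G - F ^ 2)) ∧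
       det3 (vdv (vdu β) p) (vdu β p) (vdv β p) / nrm =
         -(pdv (pdu h) p) / (h p ^ 4 * Real.sqrt (E * G - F ^ 2)) ∧
       det3 (vdv (vdv β) p) (vdu β p) (vdv β p) / nrm =
         -(pdv (pdv h) p) / (h p ^ 4 * Real.sqrt (E * G - F ^ 2))) := by
  intro p hp
  have h0 := (hpos p hp).ne'
  have hc := hh.contDiffAt (hU.mem_nhds hp)
  have f1 := aux_first hU hh hpos hβ (1, 0) p hp
  have f2 := aux_first hU hh hpos hβ (0, 1) p hp
  have s11 := aux_second hU hh hpos hβ (1, 0) (1, 0) p hp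
  have s12 := aux_second hU hh hpos hβ (1, 0) (0, 1) p hp
  have s22 := aux_second hU hh hpos hβ (0, 1) (0, 1) p hp
  have A1 : det3 (vdu (vdu β) p) (vdu β p) (vdv β p) = -(pdu (pdu h) p) / h p ^ 4 := by
    unfold vdu vdv pdu det3
    rw [s11, f1, f2, Matrix.det_fin_three]
    simp
    field_simp
    ring
  have A2 : det3 (vdv (vdu β) p) (vdu β p) (vdv β p) = -(pdv (pdu h) p) / h p ^ 4 := by
    unfold vdu vdv pdu pdv det3
    rw [s12, f1, f2, Matrix.det_fin_three]
    simp
    field_simp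
    ring
  have A3 : det3 (vdv (vdv β) p) (vdu β p) (vdv β p) = -(pdv (pdv h) p) / h p ^ 4 := by
    unfold vdu vdv pdv det3
    rw [s22, f1, f2, Matrix.det_fin_three]
    simp
    field_simp
    ring
  have L : dot3 (vdu β p) (vdu β p) * dot3 (vdv β p) (vdv β p) - dot3 (vdu β p) (vdv β p) ^ 2 =
      dot3 (cross3 (vdu β p) (vdv β p)) (cross3 (vdu β p) (vdv β p)) := by
    simp [dot3, cross3]
    ring
  refine ⟨A1, A2, A3, L, ?_, ?_, ?_⟩
  · rw [L, A1, div_div]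
  · rw [L, A2, div_div]
  · rw [L, A3, div_div]
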